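/- For every j with 0 ≤ j ≤ n, every α ∈ ℝ and every C^∞ function f on X one has (L − α σ_j) f = e^{α R_j} \bar{L}_α ( e^{−α R_j} f ), where \bar{L}_α = L + γ Σ_{i∈{1,n}} ( 2α r_i·∇_{r_i} − (α − α²) T_i^{−1} |r_i|² ) + 2 d γ α (the last two terms acting as multiplication operators). In particular all the operators L − α σ_j, 0 ≤ j ≤ n, are conjugate to the same operator \bar{L}_α, which does not depend on j. -/

import Mathlib

open scoped BigOperators

noncomputable section

/-- `Vc d` : vectors in ℝ^d. -/
abbrev Vc (d : ℕ) := Fin d → ℝ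
/-- Configurations of `m` oscillators. -/
abbrev Cfg (m d : ℕ) := Fin m → Vc d
/-- Phase space X = p × q × r₁ × rₙ (for a chain of `m` oscillators). -/
abbrev Phs (m d : ℕ) := Cfg m d × Cfg m d × Vc d × Vc d

variable {m d : ℕ}

/-- unit coordinate vector in the p-block -/
def eP (i : Fin m) (a : Fin d) : Phs m d := (Pi.single i (Pi.single a 1), 0, 0, 0)
/-- unit coordinate vector in the q-block -/
def eQ (i : Fin m) (a : Fin d) : Phs m d := (0, Pi.single i (Pi.single a 1), 0, 0)
/-- unit coordinate vector in the r₁-block -/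
def eR1 (a : Fin d) : Phs m d := (0, 0, Pi.single a 1, 0)
/-- unit coordinate vector in the rₙ-block -/
def eRn (a : Fin d) : Phs m d := (0, 0, 0, Pi.single a 1)

/-- directional (partial) derivative -/
def PD (f : Phs m d → ℝ) (x v : Phs m d) : ℝ := fderiv ℝ f x v

variable {n : ℕ}

/-- total potential V(q) = Σᵢ U⁽¹⁾(qᵢ) + Σᵢ U⁽²⁾(qᵢ − qᵢ₊₁) of a chain of n+2 oscillators -/
def Vtot (U1 U2 : Vc d → ℝ) (q : Cfg (n+2) d) : ℝ :=
  (∑ i, U1 (q i)) + ∑ i : Fin (n+1), U2 (q i.castSucc - q i.succ)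

/-- the generator L of the dynamics of the chain coupled to two reservoirs -/
def gen (γ lam T1 Tn : ℝ) (U1 U2 : Vc d → ℝ) (f : Phs (n+2) d → ℝ) (x : Phs (n+2) d) : ℝ :=
  (γ * (T1 * ∑ a, PD (fun y => PD f y (eR1 a)) x (eR1 a)
        - ∑ a, x.2.2.1 a * PD f x (eR1 a))
    + lam * ((∑ a, x.1 0 a * PD f x (eR1 a)) - ∑ a, x.2.2.1 a * PD f x (eP 0 a)))
  + (γ * (Tn * ∑ a, PD (fun y => PD f y (eRn a)) x (eRn a)
        - ∑ a, x.2.2.2 a * PD f x (eRn a))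
    + lam * ((∑ a, x.1 (Fin.last (n+1)) a * PD f x (eRn a))
        - ∑ a, x.2.2.2 a * PD f x (eP (Fin.last (n+1)) a)))
  + ∑ i, ((∑ a, x.1 i a * PD f x (eQ i a))
        - ∑ a, fderiv ℝ (Vtot U1 U2) x.2.1 (Pi.single i (Pi.single a 1)) * PD f x (eP i a))

/-- nat-indexed access to the oscillator coordinates (junk value outside the range) -/
def cfgNat (q : Cfg (n+2) d) (k : ℕ) : Vc d := if h : k < n + 2 then q ⟨k, h⟩ else 0

/-- local energies H_k, 0-indexed: k ∈ {0, …, n+1} -/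
def Hloc (U1 U2 : Vc d → ℝ) (k : ℕ) (x : Phs (n+2) d) : ℝ :=
  (∑ a, (cfgNat x.1 k a) ^ 2) / 2 + U1 (cfgNat x.2.1 k)
  + (if k = 0 then 0 else (1/2) * U2 (cfgNat x.2.1 (k-1) - cfgNat x.2.1 k))
  + (if k = n + 1 then 0 else (1/2) * U2 (cfgNat x.2.1 k - cfgNat x.2.1 (k+1)))

/-- heat flows Φ_j, j ∈ {0, …, n+2}: Φ_0 = −λr₁·p_0 is the flow from the left
reservoir into the chain, Φ_{n+2} = λrₙ·p_{n+1} the flow into the right reservoir,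
and for 1 ≤ j ≤ n+1, Φ_j is the flow from the (0-indexed) oscillator j−1 to the
oscillator j. -/
def heatFlow (lam : ℝ) (U2 : Vc d → ℝ) (j : ℕ) (x : Phs (n+2) d) : ℝ :=
  if j = 0 then - lam * ∑ a, x.2.2.1 a * x.1 0 a
  else if j = n + 2 then lam * ∑ a, x.2.2.2 a * x.1 (Fin.last (n+1)) a
  else ∑ a, ((cfgNat x.1 (j-1) a + cfgNat x.1 j a) / 2)
        * fderiv ℝ U2 (cfgNat x.2.1 (j-1) - cfgNat x.2.1 j) (Pi.single a 1)

/-- entropy production σ_j = (1/Tₙ − 1/T₁) Φ_j -/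
def sigmaEP (lam T1 Tn : ℝ) (U2 : Vc d → ℝ) (j : ℕ) (x : Phs (n+2) d) : ℝ :=
  (1 / Tn - 1 / T1) * heatFlow lam U2 j x

/-- two-temperatures Gibbs exponent R_j, j ∈ {0, …, n+2}: the first j oscillators
are weighted with 1/T₁, the remaining ones with 1/Tₙ. -/
def Rj (T1 Tn : ℝ) (U1 U2 : Vc d → ℝ) (j : ℕ) (x : Phs (n+2) d) : ℝ :=
  (1 / T1) * ((∑ a, (x.2.2.1 a) ^ 2) / 2 + ∑ k ∈ Finset.range j, Hloc U1 U2 k x)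
  + (1 / Tn) * ((∑ k ∈ Finset.Ico j (n+2), Hloc U1 U2 k x) + (∑ a, (x.2.2.2 a) ^ 2) / 2)

/-- the operator `L̄_α = L + γ Σ_{i∈{1,n}} (2α rᵢ·∇_{rᵢ} − (α−α²) Tᵢ⁻¹ |rᵢ|²) + 2dγα` -/
def barL (γ lam T1 Tn : ℝ) (U1 U2 : Vc d → ℝ) (α : ℝ)
    (h : Phs (n+2) d → ℝ) (x : Phs (n+2) d) : ℝ :=
  gen γ lam T1 Tn U1 U2 h x
  + γ * (2 * α * (∑ a, x.2.2.1 a * PD h x (eR1 a))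
          - (α - α ^ 2) * T1⁻¹ * (∑ a, (x.2.2.1 a) ^ 2) * h x)
  + γ * (2 * α * (∑ a, x.2.2.2 a * PD h x (eRn a))
          - (α - α ^ 2) * Tn⁻¹ * (∑ a, (x.2.2.2 a) ^ 2) * h x)
  + 2 * (d : ℝ) * γ * α * h x

/-!
The generator is the sum of the two Ornstein–Uhlenbeck generators `γ (T Δ_r - r·∇_r)` and of a
first-order operator, the derivation along a vector field `X`. Since `∇_r R_j = r / T` for either
reservoir, conjugating its Ornstein–Uhlenbeck generator by `e^{-α R_j}` produces exactly the drift,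
the quadratic potential and the constant `d γ α` in `L̄_α`, whatever `j` is. The derivation only
picks up the multiplication by `-α X R_j`. Local energy conservation reads
`X H_k = Φ_k - Φ_{k + 1}`, so that `X R_j` telescopes over each of the two blocks of oscillators,
and the remaining boundary terms add up to `(1 / Tₙ - 1 / T₁) Φ_j = σ_j`.
-/

theorem sum_smul_map_single {ι R M : Type*} [Fintype ι] [DecidableEq ι] [Semiring R]
    [AddCommMonoid M] [Module R M] (D : (ι → R) →ₗ[R] M) (v : ι → R) :
    ∑ a, v a • D (Pi.single a 1) = D v := by
  conv_rhs => rw [pi_eq_sum_univ' v, map_sum]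
  simp only [map_smul]

section Calculus

variable {ι E : Type*} [Fintype ι] [NormedAddCommGroup E] [NormedSpace ℝ E]

theorem hasFDerivAt_half_sum_sq (ℓ : E →L[ℝ] ι → ℝ) (x : E) :
    HasFDerivAt (fun y => (∑ a, ℓ y a ^ 2) / 2)
      (∑ a, ℓ x a • (ContinuousLinearMap.proj a ∘L ℓ)) x := by
  have hcoord (a : ι) : HasFDerivAt (fun y => ℓ y a) (ContinuousLinearMap.proj a ∘L ℓ) x :=
    (ContinuousLinearMap.proj a ∘L ℓ).hasFDerivAt
  have hsum := (HasFDerivAt.fun_sum fun a (_ : a ∈ Finset.univ) => (hcoord a).pow 2).mul_const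
    (2⁻¹ : ℝ)
  refine hsum.congr_fderiv ?_
  ext v
  simp [Finset.mul_sum, mul_assoc]

theorem fderiv_exp_mul {R f : E → ℝ} {x : E} (hR : DifferentiableAt ℝ R x)
    (hf : DifferentiableAt ℝ f x) (v : E) :
    fderiv ℝ (fun y => Real.exp (R y) * f y) x v
      = Real.exp (R x) * (fderiv ℝ f x v + fderiv ℝ R x v * f x) := by
  rw [(hR.hasFDerivAt.exp.fun_mul hf.hasFDerivAt).fderiv]
  simp only [add_apply, smul_apply, smul_eq_mul]
  ring

theorem fderiv_fderiv_exp_mul {R f : E → ℝ} {x v : E} (hR : Differentiable ℝ R)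
    (hR' : DifferentiableAt ℝ (fun y => fderiv ℝ R y v) x) (hf : Differentiable ℝ f)
    (hf' : DifferentiableAt ℝ (fun y => fderiv ℝ f y v) x) :
    fderiv ℝ (fun y => fderiv ℝ (fun z => Real.exp (R z) * f z) y v) x v
      = Real.exp (R x) * (fderiv ℝ (fun y => fderiv ℝ f y v) x v
          + 2 * fderiv ℝ R x v * fderiv ℝ f x v
          + (fderiv ℝ (fun y => fderiv ℝ R y v) x v + fderiv ℝ R x v ^ 2) * f x) := by
  have hfirst : (fun y => fderiv ℝ (fun z => Real.exp (R z) * f z) y v)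
      = fun y => Real.exp (R y) * (fderiv ℝ f y v + fderiv ℝ R y v * f y) :=
    funext fun y => fderiv_exp_mul (hR y) (hf y) v
  have hprod := hf'.hasFDerivAt.fun_add (hR'.hasFDerivAt.fun_mul (hf x).hasFDerivAt)
  have hinner : fderiv ℝ (fun y => fderiv ℝ f y v + fderiv ℝ R y v * f y) x v
      = fderiv ℝ (fun y => fderiv ℝ f y v) x v + fderiv ℝ R x v * fderiv ℝ f x v
        + fderiv ℝ (fun y => fderiv ℝ R y v) x v * f x := by
    rw [hprod.fderiv]
    simp only [add_apply, smul_apply, smul_eq_mul]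
    ring
  rw [hfirst, fderiv_exp_mul (hR x) hprod.differentiableAt, hinner]
  ring

end Calculus

section Reservoir

variable {ι E : Type*} [Fintype ι] [NormedAddCommGroup E] [NormedSpace ℝ E]

/-- The Ornstein–Uhlenbeck generator `γ (T Δ_r - r·∇_r)` of a reservoir at temperature `T`. The
reservoir variable is a linear map `r` on the phase space, and `e a` is the phase space direction
in which its component `a` is differentiated. -/
def reservoirGen (γ T : ℝ) (e : ι → E) (r : E →L[ℝ] ι → ℝ) (f : E → ℝ) (x : E) : ℝ :=
  γ * (T * ∑ a, fderiv ℝ (fun y => fderiv ℝ f y (e a)) x (e a) - ∑ a, r x a * fderiv ℝ f x (e a))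

/-- The contribution `γ (T Δ_r - r·∇_r) + γ (2α r·∇_r - (α - α²) T⁻¹ |r|²) + d γ α` of a single
reservoir to `L̄_α`, where `d` is the number of components of `r`. -/
def tiltedReservoirGen (γ T α : ℝ) (e : ι → E) (r : E →L[ℝ] ι → ℝ) (f : E → ℝ) (x : E) : ℝ :=
  reservoirGen γ T e r f x
    + γ * (2 * α * ∑ a, r x a * fderiv ℝ f x (e a) - (α - α ^ 2) * T⁻¹ * (∑ a, r x a ^ 2) * f x)
    + Fintype.card ι * γ * α * f x

theorem tiltedReservoirGen_exp_mul {γ T α : ℝ} (hT : T ≠ 0) {e : ι → E} {r : E →L[ℝ] ι → ℝ}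
    (he : ∀ a, r (e a) a = 1) {R f : E → ℝ} {x : E} (hR : Differentiable ℝ R)
    (hRe : ∀ y a, fderiv ℝ R y (e a) = T⁻¹ * r y a) (hf : Differentiable ℝ f)
    (hf' : DifferentiableAt ℝ (fderiv ℝ f) x) :
    tiltedReservoirGen γ T α e r (fun y => Real.exp (-α * R y) * f y) x
      = Real.exp (-α * R x) * reservoirGen γ T e r f x := by
  have hS : Differentiable ℝ fun y => -α * R y := hR.const_mul _
  have hSe (y : E) (a : ι) : fderiv ℝ (fun y => -α * R y) y (e a) = -α * T⁻¹ * r y a := by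
    rw [fderiv_const_mul (hR y), smul_apply, hRe, smul_eq_mul, mul_assoc]
  have hS' (a : ι) : HasFDerivAt (fun y => fderiv ℝ (fun y => -α * R y) y (e a))
      ((-α * T⁻¹) • (ContinuousLinearMap.proj a ∘L r)) x := by
    simp only [hSe]
    exact (ContinuousLinearMap.proj a ∘L r).hasFDerivAt.const_mul _
  have hgrad (a : ι) : fderiv ℝ (fun y => Real.exp (-α * R y) * f y) x (e a)
      = Real.exp (-α * R x) * (fderiv ℝ f x (e a) - α * T⁻¹ * r x a * f x) := by
    rw [fderiv_exp_mul (hS x) (hf x), hSe]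
    ring
  have hhess (a : ι) :
      fderiv ℝ (fun y => fderiv ℝ (fun z => Real.exp (-α * R z) * f z) y (e a)) x (e a)
        = Real.exp (-α * R x) * (fderiv ℝ (fun y => fderiv ℝ f y (e a)) x (e a)
          - 2 * α * T⁻¹ * (r x a * fderiv ℝ f x (e a))
          + (α ^ 2 * T⁻¹ ^ 2 * r x a ^ 2 - α * T⁻¹) * f x) := by
    rw [fderiv_fderiv_exp_mul hS (hS' a).differentiableAt hf
      (hf'.clm_apply (differentiableAt_const _)), (hS' a).fderiv, hSe]
    simp only [smul_apply, ContinuousLinearMap.comp_apply, ContinuousLinearMap.proj_apply, he,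
      smul_eq_mul]
    ring
  have hgrad_sum : ∑ a, r x a * fderiv ℝ (fun y => Real.exp (-α * R y) * f y) x (e a)
      = Real.exp (-α * R x)
        * (∑ a, r x a * fderiv ℝ f x (e a) - α * T⁻¹ * (∑ a, r x a ^ 2) * f x) := by
    simp only [hgrad, Finset.mul_sum, Finset.sum_mul, ← Finset.sum_sub_distrib]
    exact Finset.sum_congr rfl fun a _ => by ring
  simp only [tiltedReservoirGen, reservoirGen, hgrad_sum, hhess, ← Finset.mul_sum,
    ← Finset.sum_mul, Finset.sum_add_distrib, Finset.sum_sub_distrib, Finset.sum_const,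
    Finset.card_univ, nsmul_eq_mul]
  field_simp
  ring

end Reservoir

section Coordinates

/-- The reservoir variable `r₁` as a linear map on the phase space. -/
def leftReservoir : Phs m d →L[ℝ] Vc d :=
  .fst ℝ _ _ ∘L .snd ℝ _ _ ∘L .snd ℝ _ _

/-- The reservoir variable `rₙ` as a linear map on the phase space. -/
def rightReservoir : Phs m d →L[ℝ] Vc d :=
  .snd ℝ _ _ ∘L .snd ℝ _ _ ∘L .snd ℝ _ _

@[simp]
theorem leftReservoir_apply (x : Phs m d) : leftReservoir x = x.2.2.1 := rfl

@[simp]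
theorem rightReservoir_apply (x : Phs m d) : rightReservoir x = x.2.2.2 := rfl

theorem eq_sum_smul_basis (v : Phs m d) :
    v = (∑ i, ∑ a, v.1 i a • eP i a) + (∑ i, ∑ a, v.2.1 i a • eQ i a)
      + (∑ a, v.2.2.1 a • eR1 a) + ∑ a, v.2.2.2 a • eRn a := by
  ext <;>
    simp [eP, eQ, eR1, eRn, Prod.fst_sum, Prod.snd_sum, Finset.sum_apply, Pi.single_apply]

theorem PD_eq_sum (f : Phs m d → ℝ) (x v : Phs m d) :
    PD f x v = (∑ i, ∑ a, v.1 i a * PD f x (eP i a)) + (∑ i, ∑ a, v.2.1 i a * PD f x (eQ i a))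
      + (∑ a, v.2.2.1 a * PD f x (eR1 a)) + ∑ a, v.2.2.2 a * PD f x (eRn a) := by
  simp only [PD]
  conv_lhs => rw [eq_sum_smul_basis v]
  simp only [map_add, map_sum, map_smul, smul_eq_mul]

/-- The evaluation `cfgNat · k` as a linear map, zero for `k` outside the chain. -/
def siteCoord (k : ℕ) : Cfg (n + 2) d →L[ℝ] Vc d :=
  if h : k < n + 2 then ContinuousLinearMap.proj ⟨k, h⟩ else 0

@[simp]
theorem siteCoord_apply (k : ℕ) (q : Cfg (n + 2) d) : siteCoord k q = cfgNat q k := by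
  unfold siteCoord cfgNat
  split_ifs <;> rfl

theorem cfgNat_val (q : Cfg (n + 2) d) (i : Fin (n + 2)) : cfgNat q i = q i :=
  dif_pos i.isLt

theorem cfgNat_single (i : Fin (n + 2)) (w : Vc d) (k : ℕ) :
    cfgNat (Pi.single i w : Cfg (n + 2) d) k = if k = i then w else 0 := by
  unfold cfgNat
  split_ifs with hk hki hki
  · subst hki
    exact Pi.single_eq_same (M := fun _ => Vc d) i w
  · exact Pi.single_eq_of_ne (M := fun _ => Vc d) (fun h => hki (congrArg Fin.val h)) w
  · omega
  · rfl

end Coordinates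

section Bonds

/-- The energy of bond `k`, which joins the oscillators `k - 1` and `k`. The bonds `0` and `n + 2`
at the free ends of the chain carry no energy. -/
def bondEnergy (U2 : Vc d → ℝ) (k : ℕ) (q : Cfg (n + 2) d) : ℝ :=
  if k = 0 ∨ k = n + 2 then 0 else U2 (cfgNat q (k - 1) - cfgNat q k)

/-- The tension of bond `k`: the derivative of its energy with respect to the elongation
`q_{k - 1} - q_k`, zero at the free ends. -/
def bondTension (U2 : Vc d → ℝ) (k : ℕ) (q : Cfg (n + 2) d) : Vc d →L[ℝ] ℝ :=
  if k = 0 ∨ k = n + 2 then 0 else fderiv ℝ U2 (cfgNat q (k - 1) - cfgNat q k)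

variable {U1 U2 : Vc d → ℝ}

theorem bondTension_zero (q : Cfg (n + 2) d) : bondTension U2 0 q = 0 :=
  if_pos (.inl rfl)

theorem bondTension_last (q : Cfg (n + 2) d) : bondTension U2 (n + 2) q = 0 :=
  if_pos (.inr rfl)

theorem hasFDerivAt_bondEnergy (hU2 : Differentiable ℝ U2) (k : ℕ) (q : Cfg (n + 2) d) :
    HasFDerivAt (bondEnergy U2 k)
      (bondTension U2 k q ∘L (siteCoord (k - 1) - siteCoord k)) q := by
  unfold bondEnergy bondTension
  split_ifs
  · exact (hasFDerivAt_const _ _).congr_fderiv (ContinuousLinearMap.zero_comp _).symm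
  · simp only [← siteCoord_apply]
    exact (hU2 _).hasFDerivAt.comp q (siteCoord (k - 1) - siteCoord k).hasFDerivAt

theorem hasFDerivAt_comp_cfgNat (hU1 : Differentiable ℝ U1) (k : ℕ) (q : Cfg (n + 2) d) :
    HasFDerivAt (fun q => U1 (cfgNat q k)) (fderiv ℝ U1 (cfgNat q k) ∘L siteCoord k) q := by
  simp only [← siteCoord_apply]
  exact (hU1 _).hasFDerivAt.comp q (siteCoord k).hasFDerivAt

theorem Vtot_eq_sum_range (U1 U2 : Vc d → ℝ) (q : Cfg (n + 2) d) :
    Vtot U1 U2 q = (∑ k ∈ Finset.range (n + 2), U1 (cfgNat q k))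
      + ∑ k ∈ Finset.range (n + 1), bondEnergy U2 (k + 1) q := by
  have hbond (i : Fin (n + 1)) : bondEnergy U2 (i + 1) q = U2 (q i.castSucc - q i.succ) := by
    rw [bondEnergy, if_neg (by omega), Nat.add_sub_cancel, ← cfgNat_val q i.castSucc,
      ← cfgNat_val q i.succ, Fin.val_castSucc, Fin.val_succ]
  simp only [Vtot, Finset.sum_range, cfgNat_val, hbond]

/-- The differential of the total potential in the position of oscillator `k`. -/
def siteGradient (U1 U2 : Vc d → ℝ) (k : ℕ) (q : Cfg (n + 2) d) : Vc d →L[ℝ] ℝ :=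
  fderiv ℝ U1 (cfgNat q k) - bondTension U2 k q + bondTension U2 (k + 1) q

theorem fderiv_Vtot_apply (hU1 : Differentiable ℝ U1) (hU2 : Differentiable ℝ U2)
    (q w : Cfg (n + 2) d) :
    fderiv ℝ (Vtot U1 U2) q w
      = ∑ k ∈ Finset.range (n + 2), siteGradient U1 U2 k q (cfgNat w k) := by
  have hderiv := (HasFDerivAt.fun_sum fun k (_ : k ∈ Finset.range (n + 2)) =>
    hasFDerivAt_comp_cfgNat hU1 k q).fun_add (HasFDerivAt.fun_sum fun k
      (_ : k ∈ Finset.range (n + 1)) => hasFDerivAt_bondEnergy hU2 (k + 1) q)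
  have hleft : ∑ k ∈ Finset.range (n + 2), bondTension U2 k q (cfgNat w k)
      = ∑ k ∈ Finset.range (n + 1), bondTension U2 (k + 1) q (cfgNat w (k + 1)) := by
    simp [Finset.sum_range_succ' _ (n + 1), bondTension_zero]
  have hright : ∑ k ∈ Finset.range (n + 2), bondTension U2 (k + 1) q (cfgNat w k)
      = ∑ k ∈ Finset.range (n + 1), bondTension U2 (k + 1) q (cfgNat w k) := by
    simp [Finset.sum_range_succ _ (n + 1), bondTension_last]
  rw [funext (Vtot_eq_sum_range U1 U2), HasFDerivAt.fderiv hderiv]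
  simp only [siteGradient, add_apply, sub_apply, sum_apply, ContinuousLinearMap.comp_apply,
    siteCoord_apply, map_sub, Nat.add_sub_cancel, Finset.sum_add_distrib, Finset.sum_sub_distrib,
    hleft, hright]
  ring

theorem fderiv_Vtot_single (hU1 : Differentiable ℝ U1) (hU2 : Differentiable ℝ U2)
    (q : Cfg (n + 2) d) (i : Fin (n + 2)) (w : Vc d) :
    fderiv ℝ (Vtot U1 U2) q (Pi.single i w) = siteGradient U1 U2 i q w := by
  simp [fderiv_Vtot_apply hU1 hU2, cfgNat_single, apply_ite]

end Bonds

section LocalEnergies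

variable {U1 U2 : Vc d → ℝ}

/-- The potential energy which `H_k` attributes to oscillator `k`: its pinning energy and half the
energy of the two adjacent bonds. -/
def sitePotential (U1 U2 : Vc d → ℝ) (k : ℕ) (q : Cfg (n + 2) d) : ℝ :=
  U1 (cfgNat q k) + 1 / 2 * (bondEnergy U2 k q + bondEnergy U2 (k + 1) q)

theorem hasFDerivAt_sitePotential (hU1 : Differentiable ℝ U1) (hU2 : Differentiable ℝ U2) (k : ℕ)
    (q : Cfg (n + 2) d) :
    HasFDerivAt (sitePotential U1 U2 k)
      (fderiv ℝ U1 (cfgNat q k) ∘L siteCoord k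
        + (1 / 2 : ℝ) • (bondTension U2 k q ∘L (siteCoord (k - 1) - siteCoord k)
          + bondTension U2 (k + 1) q ∘L (siteCoord k - siteCoord (k + 1)))) q :=
  (hasFDerivAt_comp_cfgNat hU1 k q).fun_add
    (((hasFDerivAt_bondEnergy hU2 k q).fun_add
      (hasFDerivAt_bondEnergy hU2 (k + 1) q)).const_mul (1 / 2))

theorem Hloc_eq_kinetic_add_sitePotential (U1 U2 : Vc d → ℝ) {k : ℕ} (hk : k < n + 2)
    (x : Phs (n + 2) d) :
    Hloc U1 U2 k x = (∑ a, siteCoord k x.1 a ^ 2) / 2 + sitePotential U1 U2 k x.2.1 := by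
  have hleft : (k = 0 ∨ k = n + 2) ↔ k = 0 := by omega
  have hright : (k + 1 = 0 ∨ k + 1 = n + 2) ↔ k = n + 1 := by omega
  simp only [Hloc, sitePotential, bondEnergy, siteCoord_apply, hleft, hright, Nat.add_sub_cancel,
    mul_add, mul_ite, mul_zero, add_assoc]

theorem hasFDerivAt_Hloc (hU1 : Differentiable ℝ U1) (hU2 : Differentiable ℝ U2) {k : ℕ}
    (hk : k < n + 2) (x : Phs (n + 2) d) :
    HasFDerivAt (Hloc U1 U2 k)
      (∑ a, cfgNat x.1 k a • (.proj a ∘L siteCoord k ∘L .fst ℝ _ _)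
        + fderiv ℝ (sitePotential U1 U2 k) x.2.1 ∘L .fst ℝ _ _ ∘L .snd ℝ _ _) x := by
  have hkin := hasFDerivAt_half_sum_sq (siteCoord k ∘L .fst ℝ (Cfg (n + 2) d) (Cfg (n + 2) d × _)) x
  have hpot := (hasFDerivAt_sitePotential hU1 hU2 k x.2.1).differentiableAt.hasFDerivAt.comp x
    (ContinuousLinearMap.fst ℝ _ _ ∘L .snd ℝ (Cfg (n + 2) d) _).hasFDerivAt
  rw [funext (Hloc_eq_kinetic_add_sitePotential U1 U2 hk)]
  simpa only [ContinuousLinearMap.comp_apply, ContinuousLinearMap.coe_fst',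
    ContinuousLinearMap.coe_snd', siteCoord_apply, Function.comp_apply] using hkin.fun_add hpot

end LocalEnergies

section HeatFlow

variable {U1 U2 : Vc d → ℝ}

/-- The first-order part of the generator that involves no friction, as a vector field: Hamilton's
equations for the chain, together with the rotations which couple `p_1` to `r_1` and `p_n` to
`r_n`. -/
def conservativeField (lam : ℝ) (U1 U2 : Vc d → ℝ) (x : Phs (n + 2) d) : Phs (n + 2) d :=
  (fun i a => -fderiv ℝ (Vtot U1 U2) x.2.1 (Pi.single i (Pi.single a 1))
      - (if i = 0 then lam * x.2.2.1 a else 0)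
      - (if i = Fin.last (n + 1) then lam * x.2.2.2 a else 0),
    x.1, lam • x.1 0, lam • x.1 (Fin.last (n + 1)))

theorem gen_eq_reservoirGen_add (γ lam T1 Tn : ℝ) (U1 U2 : Vc d → ℝ) (f : Phs (n + 2) d → ℝ)
    (x : Phs (n + 2) d) :
    gen γ lam T1 Tn U1 U2 f x = reservoirGen γ T1 eR1 leftReservoir f x
      + reservoirGen γ Tn eRn rightReservoir f x + PD f x (conservativeField lam U1 U2 x) := by
  have hcoupling (i₀ : Fin (n + 2)) (r : Vc d) :
      ∑ i, ∑ a, (if i = i₀ then lam * (r a * fderiv ℝ f x (eP i a)) else 0)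
        = lam * ∑ a, r a * fderiv ℝ f x (eP i₀ a) := by
    rw [Finset.sum_comm, Finset.mul_sum]
    simp
  rw [PD_eq_sum f x (conservativeField lam U1 U2 x)]
  simp only [gen, PD, conservativeField, sub_mul, Finset.sum_sub_distrib, neg_mul,
    Finset.sum_neg_distrib, ite_mul, zero_mul, Pi.smul_apply, smul_eq_mul, mul_assoc,
    ← Finset.mul_sum, hcoupling, reservoirGen, leftReservoir_apply, rightReservoir_apply]
  ring

theorem barL_eq_tiltedReservoirGen_add (γ lam T1 Tn : ℝ) (U1 U2 : Vc d → ℝ) (α : ℝ)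
    (f : Phs (n + 2) d → ℝ) (x : Phs (n + 2) d) :
    barL γ lam T1 Tn U1 U2 α f x = tiltedReservoirGen γ T1 α eR1 leftReservoir f x
      + tiltedReservoirGen γ Tn α eRn rightReservoir f x
      + PD f x (conservativeField lam U1 U2 x) := by
  simp only [barL, gen_eq_reservoirGen_add, tiltedReservoirGen, leftReservoir_apply,
    rightReservoir_apply, Fintype.card_fin, PD]
  ring

theorem heatFlow_eq_bondTension_add (lam : ℝ) (U2 : Vc d → ℝ) (j : ℕ) (x : Phs (n + 2) d) :
    heatFlow lam U2 j x = 1 / 2 * bondTension U2 j x.2.1 (cfgNat x.1 (j - 1) + cfgNat x.1 j)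
      - (if j = 0 then lam * ∑ a, x.2.2.1 a * x.1 0 a else 0)
      + (if j = n + 2 then lam * ∑ a, x.2.2.2 a * x.1 (Fin.last (n + 1)) a else 0) := by
  by_cases hfirst : j = 0
  · subst hfirst
    simp [heatFlow, bondTension_zero]
  by_cases hlast : j = n + 2
  · subst hlast
    simp [heatFlow, bondTension_last]
  simp only [heatFlow, bondTension, hfirst, hlast, if_false, or_self, sub_zero, add_zero]
  rw [← ContinuousLinearMap.coe_coe, ← sum_smul_map_single, Finset.mul_sum]
  exact Finset.sum_congr rfl fun a _ => by
    simp only [Pi.add_apply, smul_eq_mul, ContinuousLinearMap.coe_coe]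
    ring

theorem sum_mul_conservativeField_fst (hU1 : Differentiable ℝ U1) (hU2 : Differentiable ℝ U2)
    (lam : ℝ) (x : Phs (n + 2) d) (i : Fin (n + 2)) :
    ∑ a, x.1 i a * (conservativeField lam U1 U2 x).1 i a
      = -siteGradient U1 U2 i x.2.1 (x.1 i)
        - (if i = 0 then lam * ∑ a, x.2.2.1 a * x.1 0 a else 0)
        - (if i = Fin.last (n + 1) then lam * ∑ a, x.2.2.2 a * x.1 (Fin.last (n + 1)) a
          else 0) := by
  have hforce : ∑ a, x.1 i a * siteGradient U1 U2 i x.2.1 (Pi.single a 1)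
      = siteGradient U1 U2 i x.2.1 (x.1 i) :=
    sum_smul_map_single (siteGradient U1 U2 i x.2.1).toLinearMap (x.1 i)
  have hcoupling (i₀ : Fin (n + 2)) (r : Vc d) :
      ∑ a, (if i = i₀ then x.1 i a * (lam * r a) else 0)
        = if i = i₀ then lam * ∑ a, r a * x.1 i₀ a else 0 := by
    split_ifs with h
    · subst h
      rw [Finset.mul_sum]
      exact Finset.sum_congr rfl fun a _ => by ring
    · exact Finset.sum_const_zero
  simp only [conservativeField, fderiv_Vtot_single hU1 hU2, mul_sub, mul_neg, mul_ite, mul_zero,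
    Finset.sum_sub_distrib, Finset.sum_neg_distrib, hforce, hcoupling]

theorem fderiv_Hloc_conservativeField (hU1 : Differentiable ℝ U1) (hU2 : Differentiable ℝ U2)
    (lam : ℝ) {k : ℕ} (hk : k < n + 2) (x : Phs (n + 2) d) :
    fderiv ℝ (Hloc U1 U2 k) x (conservativeField lam U1 U2 x)
      = heatFlow lam U2 k x - heatFlow lam U2 (k + 1) x := by
  obtain ⟨i, rfl⟩ : ∃ i : Fin (n + 2), k = i := ⟨⟨k, hk⟩, rfl⟩
  have hkin := sum_mul_conservativeField_fst hU1 hU2 lam x i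
  have hfirst : i = 0 ↔ (i : ℕ) = 0 := Fin.ext_iff
  have hlast : i = Fin.last (n + 1) ↔ (i : ℕ) = n + 1 := Fin.ext_iff
  rw [(hasFDerivAt_Hloc hU1 hU2 hk x).fderiv, (hasFDerivAt_sitePotential hU1 hU2 i x.2.1).fderiv]
  simp only [add_apply, sub_apply, smul_apply, sum_apply, ContinuousLinearMap.comp_apply,
    ContinuousLinearMap.coe_fst', ContinuousLinearMap.coe_snd', ContinuousLinearMap.proj_apply,
    siteCoord_apply, smul_eq_mul, cfgNat_val, hkin]
  simp only [heatFlow_eq_bondTension_add, siteGradient, conservativeField, cfgNat_val, hfirst,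
    hlast, add_apply, sub_apply, map_add, map_sub, Nat.add_sub_cancel, Nat.add_eq_zero_iff,
    one_ne_zero, and_false, if_false, Nat.add_right_cancel_iff, hk.ne]
  ring

theorem sum_Ico_fderiv_Hloc_conservativeField (hU1 : Differentiable ℝ U1)
    (hU2 : Differentiable ℝ U2) (lam : ℝ) {i j : ℕ} (hij : i ≤ j) (hj : j ≤ n + 2)
    (x : Phs (n + 2) d) :
    ∑ k ∈ Finset.Ico i j, fderiv ℝ (Hloc U1 U2 k) x (conservativeField lam U1 U2 x)
      = heatFlow lam U2 i x - heatFlow lam U2 j x := by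
  have hlocal : ∀ k ∈ Finset.Ico i j,
      fderiv ℝ (Hloc U1 U2 k) x (conservativeField lam U1 U2 x)
        = -(heatFlow lam U2 (k + 1) x - heatFlow lam U2 k x) := fun k hk => by
    rw [fderiv_Hloc_conservativeField hU1 hU2 lam ((Finset.mem_Ico.1 hk).2.trans_le hj) x, neg_sub]
  rw [Finset.sum_congr rfl hlocal, Finset.sum_neg_distrib,
    Finset.sum_Ico_sub (fun k => heatFlow lam U2 k x) hij, neg_sub]

end HeatFlow

section GibbsExponent

variable {U1 U2 : Vc d → ℝ} {j : ℕ}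

theorem hasFDerivAt_Rj (T1 Tn : ℝ) (hU1 : Differentiable ℝ U1) (hU2 : Differentiable ℝ U2)
    (hj : j ≤ n + 2) (x : Phs (n + 2) d) :
    HasFDerivAt (Rj T1 Tn U1 U2 j)
      ((1 / T1) • (∑ a, x.2.2.1 a • (.proj a ∘L leftReservoir)
          + ∑ k ∈ Finset.range j, fderiv ℝ (Hloc U1 U2 k) x)
        + (1 / Tn) • (∑ k ∈ Finset.Ico j (n + 2), fderiv ℝ (Hloc U1 U2 k) x
          + ∑ a, x.2.2.2 a • (.proj a ∘L rightReservoir))) x := by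
  have hH {k : ℕ} (hk : k < n + 2) : HasFDerivAt (Hloc U1 U2 k) (fderiv ℝ (Hloc U1 U2 k) x) x :=
    (hasFDerivAt_Hloc hU1 hU2 hk x).differentiableAt.hasFDerivAt
  have hleft := HasFDerivAt.fun_sum fun k (hk : k ∈ Finset.range j) =>
    hH ((Finset.mem_range.1 hk).trans_le hj)
  have hright := HasFDerivAt.fun_sum fun k (hk : k ∈ Finset.Ico j (n + 2)) =>
    hH (Finset.mem_Ico.1 hk).2
  exact (((hasFDerivAt_half_sum_sq leftReservoir x).fun_add hleft).const_mul (1 / T1)).fun_add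
    ((hright.fun_add (hasFDerivAt_half_sum_sq rightReservoir x)).const_mul (1 / Tn))

theorem fderiv_Rj_apply (T1 Tn : ℝ) (hU1 : Differentiable ℝ U1) (hU2 : Differentiable ℝ U2)
    (hj : j ≤ n + 2) (x v : Phs (n + 2) d) :
    fderiv ℝ (Rj T1 Tn U1 U2 j) x v
      = 1 / T1 * (∑ a, x.2.2.1 a * v.2.2.1 a
          + ∑ k ∈ Finset.range j, fderiv ℝ (Hloc U1 U2 k) x v)
        + 1 / Tn * (∑ k ∈ Finset.Ico j (n + 2), fderiv ℝ (Hloc U1 U2 k) x v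
          + ∑ a, x.2.2.2 a * v.2.2.2 a) := by
  rw [(hasFDerivAt_Rj T1 Tn hU1 hU2 hj x).fderiv]
  simp only [add_apply, smul_apply, sum_apply, ContinuousLinearMap.comp_apply,
    ContinuousLinearMap.proj_apply, leftReservoir_apply, rightReservoir_apply, smul_eq_mul]

theorem fderiv_Hloc_eq_zero (hU1 : Differentiable ℝ U1) (hU2 : Differentiable ℝ U2) {k : ℕ}
    (hk : k < n + 2) (x : Phs (n + 2) d) (r : Vc d × Vc d) :
    fderiv ℝ (Hloc U1 U2 k) x (0, 0, r) = 0 := by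
  have hmomentum : cfgNat (0 : Cfg (n + 2) d) k = 0 := by rw [← siteCoord_apply, map_zero]
  rw [(hasFDerivAt_Hloc hU1 hU2 hk x).fderiv]
  simp [hmomentum]

theorem fderiv_Rj_reservoir (T1 Tn : ℝ) (hU1 : Differentiable ℝ U1) (hU2 : Differentiable ℝ U2)
    (hj : j ≤ n + 2) (x : Phs (n + 2) d) (r : Vc d × Vc d) :
    fderiv ℝ (Rj T1 Tn U1 U2 j) x (0, 0, r)
      = T1⁻¹ * ∑ a, x.2.2.1 a * r.1 a + Tn⁻¹ * ∑ a, x.2.2.2 a * r.2 a := by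
  have hleft : ∑ k ∈ Finset.range j, fderiv ℝ (Hloc U1 U2 k) x (0, 0, r) = 0 :=
    Finset.sum_eq_zero fun k hk =>
      fderiv_Hloc_eq_zero hU1 hU2 ((Finset.mem_range.1 hk).trans_le hj) x r
  have hright : ∑ k ∈ Finset.Ico j (n + 2), fderiv ℝ (Hloc U1 U2 k) x (0, 0, r) = 0 :=
    Finset.sum_eq_zero fun k hk => fderiv_Hloc_eq_zero hU1 hU2 (Finset.mem_Ico.1 hk).2 x r
  rw [fderiv_Rj_apply T1 Tn hU1 hU2 hj, hleft, hright, add_zero, zero_add, one_div, one_div]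

theorem fderiv_Rj_eR1 (T1 Tn : ℝ) (hU1 : Differentiable ℝ U1) (hU2 : Differentiable ℝ U2)
    (hj : j ≤ n + 2) (x : Phs (n + 2) d) (a : Fin d) :
    fderiv ℝ (Rj T1 Tn U1 U2 j) x (eR1 a) = T1⁻¹ * leftReservoir x a := by
  simp [eR1, fderiv_Rj_reservoir T1 Tn hU1 hU2 hj, Pi.single_apply]

theorem fderiv_Rj_eRn (T1 Tn : ℝ) (hU1 : Differentiable ℝ U1) (hU2 : Differentiable ℝ U2)
    (hj : j ≤ n + 2) (x : Phs (n + 2) d) (a : Fin d) :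
    fderiv ℝ (Rj T1 Tn U1 U2 j) x (eRn a) = Tn⁻¹ * rightReservoir x a := by
  simp [eRn, fderiv_Rj_reservoir T1 Tn hU1 hU2 hj, Pi.single_apply]

theorem fderiv_Rj_conservativeField (lam T1 Tn : ℝ) (hU1 : Differentiable ℝ U1)
    (hU2 : Differentiable ℝ U2) (hj : j ≤ n + 2) (x : Phs (n + 2) d) :
    fderiv ℝ (Rj T1 Tn U1 U2 j) x (conservativeField lam U1 U2 x) = sigmaEP lam T1 Tn U2 j x := by
  have hleft : ∑ a, x.2.2.1 a * (conservativeField lam U1 U2 x).2.2.1 a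
      = -heatFlow lam U2 0 x := by
    simp [conservativeField, heatFlow, Finset.mul_sum, mul_left_comm]
  have hright : ∑ a, x.2.2.2 a * (conservativeField lam U1 U2 x).2.2.2 a
      = heatFlow lam U2 (n + 2) x := by
    simp [conservativeField, heatFlow, Finset.mul_sum, mul_left_comm]
  rw [fderiv_Rj_apply T1 Tn hU1 hU2 hj, Finset.range_eq_Ico,
    sum_Ico_fderiv_Hloc_conservativeField hU1 hU2 lam j.zero_le hj,
    sum_Ico_fderiv_Hloc_conservativeField hU1 hU2 lam hj le_rfl, hleft, hright, sigmaEP]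
  ring

end GibbsExponent

theorem stmt4_general (n d : ℕ) (γ lam : ℝ) {T1 Tn : ℝ} (hT1 : T1 ≠ 0) (hTn : Tn ≠ 0)
    {U1 U2 : Vc d → ℝ} (hU1 : Differentiable ℝ U1) (hU2 : Differentiable ℝ U2) {j : ℕ}
    (hj : j ≤ n + 2) (α : ℝ) {f : Phs (n + 2) d → ℝ} {x : Phs (n + 2) d} (hf : Differentiable ℝ f)
    (hf' : DifferentiableAt ℝ (fderiv ℝ f) x) :
    gen γ lam T1 Tn U1 U2 f x - α * sigmaEP lam T1 Tn U2 j x * f x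
      = Real.exp (α * Rj T1 Tn U1 U2 j x)
          * barL γ lam T1 Tn U1 U2 α (fun z => Real.exp (-α * Rj T1 Tn U1 U2 j z) * f z) x := by
  have hR : Differentiable ℝ (Rj T1 Tn U1 U2 j) := fun y =>
    (hasFDerivAt_Rj T1 Tn hU1 hU2 hj y).differentiableAt
  have hdrift : PD (fun z => Real.exp (-α * Rj T1 Tn U1 U2 j z) * f z) x
      (conservativeField lam U1 U2 x) = Real.exp (-α * Rj T1 Tn U1 U2 j x)
        * (PD f x (conservativeField lam U1 U2 x) - α * sigmaEP lam T1 Tn U2 j x * f x) := by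
    rw [PD, PD, fderiv_exp_mul ((hR x).const_mul _) (hf x), fderiv_const_mul (hR x), smul_apply,
      fderiv_Rj_conservativeField lam T1 Tn hU1 hU2 hj, smul_eq_mul]
    ring
  have hexp : Real.exp (α * Rj T1 Tn U1 U2 j x) * Real.exp (-α * Rj T1 Tn U1 U2 j x) = 1 := by
    rw [neg_mul, ← Real.exp_add, add_neg_cancel, Real.exp_zero]
  rw [barL_eq_tiltedReservoirGen_add, gen_eq_reservoirGen_add, hdrift,
    tiltedReservoirGen_exp_mul hT1 (by simp [eR1]) hR (fderiv_Rj_eR1 T1 Tn hU1 hU2 hj) hf hf',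
    tiltedReservoirGen_exp_mul hTn (by simp [eRn]) hR (fderiv_Rj_eRn T1 Tn hU1 hU2 hj) hf hf',
    ← mul_add, ← mul_add, ← mul_assoc, hexp, one_mul, add_sub_assoc]

/-- for every j ∈ {0,…,n+2}, α ∈ ℝ and smooth f one has
`(L − ασ_j) f = e^{αR_j} L̄_α (e^{−αR_j} f)`; in particular all the operators
`L − ασ_j` are conjugate to the same operator `L̄_α`, which does not depend on j. -/
theorem stmt4 (n d : ℕ) (hd : 1 ≤ d) (γ lam T1 Tn : ℝ)
    (hγ : 0 < γ) (hlam : 0 < lam) (hT1 : 0 < T1) (hTn : 0 < Tn)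
    (U1 U2 : Vc d → ℝ) (hU1 : ContDiff ℝ (⊤ : ℕ∞) U1) (hU2 : ContDiff ℝ (⊤ : ℕ∞) U2) :
    ∀ j : ℕ, j ≤ n + 2 → ∀ α : ℝ, ∀ f : Phs (n+2) d → ℝ, ContDiff ℝ (⊤ : ℕ∞) f →
      ∀ x : Phs (n+2) d,
        gen γ lam T1 Tn U1 U2 f x - α * sigmaEP lam T1 Tn U2 j x * f x
          = Real.exp (α * Rj T1 Tn U1 U2 j x)
              * barL γ lam T1 Tn U1 U2 α
                  (fun z => Real.exp (- α * Rj T1 Tn U1 U2 j z) * f z) x := by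
  exact fun j hj α f hf x =>
    stmt4_general n d γ lam hT1.ne' hTn.ne' (hU1.differentiable (by simp))
      (hU2.differentiable (by simp)) hj α (hf.differentiable (by simp))
      (((hf.fderiv_right (m := 1) (by norm_cast)).differentiable one_ne_zero) x)

end
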